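/- arXiv:1511.01355 — 5 statements merged into one kernel-verified Lean document; each statement's English description precedes it below -/
import Mathlib

section
/- Let 0 < b < a be real numbers, c = √(a² − b²), and let h > 0 be determined by sinh(h/2) = c/b (equivalently cosh(h/2) = a/b). Define q̂₀ : ℝ → ℝ² by q̂₀(s) = (a tanh s, b sech s). Then for every s ∈ ℝ the focus (−c, 0) lies on the segment joining q̂₀(s) to −q̂₀(s+h); that is, there exists t ∈ [0,1] with (−c, 0) = (1−t)·q̂₀(s) + t·(−q̂₀(s+h)). -/
/-- For the ellipse with semi-axes `0 < b < a`, semi-focal distance `c = √(a² − b²)`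
and characteristic exponent `h` (with `sinh(h/2) = c/b`), the focus `(−c, 0)` lies
on the segment joining `q̂₀(s) = (a tanh s, b sech s)` to `−q̂₀(s + h)`. -/
theorem focus_on_segment (a b c h : ℝ) (hb : 0 < b) (hab : b < a)
    (hc : c = Real.sqrt (a ^ 2 - b ^ 2)) (hh : 0 < h)
    (hsinh : Real.sinh (h / 2) = c / b)
    (q : ℝ → ℝ × ℝ)
    (hq : q = fun s => (a * Real.tanh s, b * (1 / Real.cosh s)))
    (s : ℝ) :
    ∃ t ∈ Set.Icc (0 : ℝ) 1,
      ((-c, 0) : ℝ × ℝ) = (1 - t) • q s + t • (-(q (s + h))) := by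
  have hc2 : c ^ 2 = a ^ 2 - b ^ 2 := by
    rw [hc, Real.sq_sqrt]; nlinarith
  have hcosh : Real.cosh (h / 2) = a / b := by
    have h1 := Real.cosh_sq (h / 2)
    rw [hsinh] at h1
    have h2 : Real.cosh (h / 2) ^ 2 = (a / b) ^ 2 := by
      rw [h1, div_pow, div_pow, hc2]; field_simp; ring
    have ha : 0 < a := hb.trans hab
    exact (pow_left_inj₀ (Real.cosh_pos _).le (div_pos ha hb).le two_ne_zero).1 h2
  have p1 := Real.cosh_pos s
  have p2 := Real.cosh_pos (s + h)
  have p3 : 0 < Real.cosh s + Real.cosh (s + h) := by positivity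
  have key : a * (Real.sinh (s + h) - Real.sinh s) = c * (Real.cosh s + Real.cosh (s + h)) := by
    have e1 : s = (s + h / 2) - h / 2 := by ring
    have e2 : s + h = (s + h / 2) + h / 2 := by ring
    rw [e2]
    nth_rewrite 2 [e1]
    nth_rewrite 3 [e1]
    rw [Real.sinh_add (s + h / 2), Real.sinh_sub, Real.cosh_sub, Real.cosh_add (s + h / 2),
      hsinh, hcosh]
    ring
  refine ⟨Real.cosh (s + h) / (Real.cosh s + Real.cosh (s + h)), ⟨by positivity, ?_⟩, ?_⟩
  · rw [div_le_one p3]; linarith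
  · subst hq
    have e : 1 - Real.cosh (s + h) / (Real.cosh s + Real.cosh (s + h))
        = Real.cosh s / (Real.cosh s + Real.cosh (s + h)) := by
      field_simp; ring
    rw [e]
    ext
    · simp only [Prod.fst_add, Prod.smul_fst, Prod.fst_neg, smul_eq_mul, Real.tanh_eq_sinh_div_cosh]
      field_simp
      linarith
    · simp only [Prod.snd_add, Prod.smul_snd, Prod.snd_neg, smul_eq_mul]
      field_simp
      ring
end

section
/- Let 0 < b < a be real numbers, let h > 0 be determined by sinh(h/2) = √(a² − b²)/b, and define μ̂₁ : ℝ → ℝ by μ̂₁(s) = a/b³ − ab/(a² sech² s + b² tanh² s)². Then for every s ∈ ℝ the family (μ̂₁(s + j·h))_{j ∈ ℤ} is summable. -/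
theorem mu_bound_aux (a b t E : ℝ) (hb : 0 < b) (hab : b < a)
    (hE : 1 / Real.cosh t ^ 2 ≤ E) :
    ‖a / b ^ 3 - a * b / (a ^ 2 * (1 / Real.cosh t) ^ 2 + b ^ 2 * Real.tanh t ^ 2) ^ 2‖
      ≤ (2 * a * (a ^ 2 - b ^ 2) / b ^ 5) * E := by
  have hc := Real.cosh_pos t
  have hc0 := hc.ne'
  have ha : 0 < a := hb.trans hab
  have hcc : 0 < a ^ 2 - b ^ 2 := by nlinarith
  have hu : 0 < 1 / Real.cosh t ^ 2 := by positivity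
  have hD : a ^ 2 * (1 / Real.cosh t) ^ 2 + b ^ 2 * Real.tanh t ^ 2
      = b ^ 2 + (a ^ 2 - b ^ 2) * (1 / Real.cosh t ^ 2) := by
    rw [Real.tanh_eq_sinh_div_cosh, div_pow, div_pow, Real.sinh_sq]
    field_simp
    ring
  rw [hD]
  generalize 1 / Real.cosh t ^ 2 = u at *
  generalize a ^ 2 - b ^ 2 = c at *
  have hp : 0 < c * u := by positivity
  have hDp : 0 < b ^ 2 + c * u := by positivity
  have h1 : a / b ^ 3 - a * b / (b ^ 2 + c * u) ^ 2
      = a * (c * u) * (2 * b ^ 2 + c * u) / (b ^ 3 * (b ^ 2 + c * u) ^ 2) := by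
    field_simp
    ring
  have h2 : 2 * a * c / b ^ 5 * u - (a / b ^ 3 - a * b / (b ^ 2 + c * u) ^ 2)
      = a * (c * u) * (3 * b ^ 2 * (c * u) + 2 * (c * u) ^ 2) / (b ^ 5 * (b ^ 2 + c * u) ^ 2) := by
    field_simp
    ring
  have h3 : 0 ≤ 2 * a * c / b ^ 5 * u - (a / b ^ 3 - a * b / (b ^ 2 + c * u) ^ 2) := by
    rw [h2]; positivity
  rw [Real.norm_of_nonneg (by rw [h1]; positivity)]
  have h4 : 2 * a * c / b ^ 5 * u ≤ 2 * a * c / b ^ 5 * E := by gcongr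
  linarith

theorem sech_bound_aux (t : ℝ) : 1 / Real.cosh t ^ 2 ≤ 4 * Real.exp (-(2 * t)) := by
  have hc := Real.cosh_pos t
  rw [div_le_iff₀ (by positivity), Real.cosh_eq]
  have h1 : Real.exp (-(2 * t)) = Real.exp (-t) ^ 2 := by
    rw [← Real.exp_nat_mul]; congr 1; push_cast; ring
  have h2 : Real.exp (-t) * Real.exp t = 1 := by rw [← Real.exp_add]; simp
  rw [h1]
  have h3 : 4 * Real.exp (-t) ^ 2 * ((Real.exp t + Real.exp (-t)) / 2) ^ 2
      = (Real.exp (-t) * Real.exp t + Real.exp (-t) ^ 2) ^ 2 := by ring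
  rw [h3, h2]
  nlinarith [sq_nonneg (Real.exp (-t)), sq_nonneg (Real.exp (-t) ^ 2)]

theorem summable_aux (K s h : ℝ) (hh : 0 < h) :
    Summable (fun n : ℕ => K * (4 * Real.exp (-(2 * (s + n * h))))) := by
  have h0 : Summable (fun n : ℕ => Real.exp (-(2 * h)) ^ n) :=
    summable_geometric_of_lt_one (Real.exp_pos _).le (by rw [Real.exp_lt_one_iff]; linarith)
  refine (h0.mul_left (K * (4 * Real.exp (-(2 * s))))).congr ?_
  intro n
  rw [← Real.exp_nat_mul, mul_assoc, mul_assoc, ← Real.exp_add]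
  congr 3
  ring

/-- For `0 < b < a`, `h > 0` with `sinh(h/2) = √(a² − b²)/b`, and
`μ̂₁(s) = a/b³ − ab/(a² sech² s + b² tanh² s)²`, the family `(μ̂₁(s + jh))_{j ∈ ℤ}`
is summable for every `s ∈ ℝ`. -/
theorem hatmu1_summable (a b h : ℝ) (hb : 0 < b) (hab : b < a) (hh : 0 < h)
    (hsinh : Real.sinh (h / 2) = Real.sqrt (a ^ 2 - b ^ 2) / b)
    (μ : ℝ → ℝ)
    (hμ : μ = fun s => a / b ^ 3 -
      a * b / (a ^ 2 * (1 / Real.cosh s) ^ 2 + b ^ 2 * Real.tanh s ^ 2) ^ 2)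
    (s : ℝ) :
    Summable (fun j : ℤ => μ (s + j * h)) := by
  subst hμ
  rw [summable_int_iff_summable_nat_and_neg]
  constructor
  · refine Summable.of_norm_bounded (summable_aux (2 * a * (a ^ 2 - b ^ 2) / b ^ 5) s h hh) ?_
    intro n
    simpa using mu_bound_aux a b (s + n * h) _ hb hab (sech_bound_aux _)
  · refine Summable.of_norm_bounded (summable_aux (2 * a * (a ^ 2 - b ^ 2) / b ^ 5) (-s) h hh) ?_
    intro n
    have h1 := sech_bound_aux (-s + n * h)
    have h2 : -s + n * h = -(s + ((-(n : ℤ) : ℤ) : ℝ) * h) := by push_cast; ring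
    have h3 : Real.cosh (-s + n * h) = Real.cosh (s + ((-(n : ℤ) : ℤ) : ℝ) * h) := by
      rw [h2, Real.cosh_neg]
    rw [h3] at h1
    exact mu_bound_aux a b _ _ hb hab h1
end

section
/- Let 0 < b < a be real numbers, let h > 0 be determined by sinh(h/2) = √(a² − b²)/b, let μ̂₁(s) = a/b³ − ab/(a² sech² s + b² tanh² s)², and define L̂₁ : ℝ → ℝ by L̂₁(s) = 2b·Σ_{j∈ℤ} μ̂₁(s + jh). Then L̂₁ is not constant: there exist s₁, s₂ ∈ ℝ with L̂₁(s₁) ≠ L̂₁(s₂). -/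
namespace HP

open Complex

lemma norm_cosh_ge (z : ℂ) : |z.re| ≤ ‖Complex.cosh z‖ := by
  have h1 : |Real.sinh z.re| ≤ ‖Complex.cosh z‖ := by
    have h2 := abs_norm_sub_norm_le (Complex.exp z) (-Complex.exp (-z))
    rw [norm_neg, Complex.norm_exp, Complex.norm_exp, sub_neg_eq_add] at h2
    rw [Complex.cosh, Real.sinh_eq, norm_div, abs_div]
    simp only [Complex.neg_re] at h2
    simp only [Complex.norm_ofNat, abs_two]
    gcongr
  refine le_trans ?_ h1
  rw [Real.abs_sinh]
  exact Real.self_le_sinh_iff.2 (abs_nonneg _)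

/-- one factor -/
noncomputable def w (K h : ℝ) (j : ℤ) (z : ℂ) : ℂ :=
  K / (Complex.cosh (z + j * h) * Complex.cosh (z + (j + 1) * h))

noncomputable def t (K h : ℝ) (j : ℤ) (z : ℂ) : ℂ := 2 * w K h j z - w K h j z ^ 2

noncomputable def r (K h : ℝ) (j : ℤ) (z : ℂ) : ℂ := if j = 0 ∨ j = -1 then 0 else t K h j z

lemma cosh_lb {h : ℝ} (hh : 0 < h) {z : ℂ} (hz : |z.re| < h / 2) {j : ℤ} (hj : j ≠ 0) :
    |(j : ℝ)| * h / 2 ≤ ‖Complex.cosh (z + j * h)‖ := by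
  refine le_trans ?_ (norm_cosh_ge _)
  have hj1 : (1 : ℝ) ≤ |(j : ℝ)| := by exact_mod_cast Int.one_le_abs hj
  have e : (z + j * h).re = z.re + j * h := by simp
  rw [e]
  have h1 := abs_sub_abs_le_abs_sub ((j : ℝ) * h) (-z.re)
  rw [abs_neg, abs_mul, abs_of_pos hh] at h1
  have : (j : ℝ) * h - -z.re = z.re + j * h := by ring
  rw [this] at h1
  nlinarith

lemma cosh_ne {h : ℝ} (hh : 0 < h) {z : ℂ} (hz : |z.re| < h / 2) {j : ℤ} (hj : j ≠ 0) :
    Complex.cosh (z + j * h) ≠ 0 := by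
  have h1 := cosh_lb hh hz hj
  have hj1 : (0 : ℝ) < |(j : ℝ)| := by positivity
  have : 0 < |(j : ℝ)| * h / 2 := by positivity
  exact norm_pos_iff.1 (lt_of_lt_of_le this h1)

lemma w_bound {K h : ℝ} (hK : 0 < K) (hh : 0 < h) {z : ℂ} (hz : |z.re| < h / 2) {j : ℤ}
    (hj : j ≠ 0) (hj' : j ≠ -1) : ‖w K h j z‖ ≤ 8 * K / h ^ 2 * (1 / (j : ℝ) ^ 2) := by
  have h1 := cosh_lb hh hz hj
  have h2 := cosh_lb hh hz (j := j + 1) (by omega)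
  have hj1 : (0 : ℝ) < |(j : ℝ)| := by positivity
  have h3 : |(j : ℝ)| / 2 ≤ |((j + 1 : ℤ) : ℝ)| := by
    have : |j| ≤ 2 * |j + 1| := by
      rcases abs_cases j with h | h <;> rcases abs_cases (j + 1) with h' | h' <;> omega
    have : |(j : ℝ)| ≤ 2 * |((j + 1 : ℤ) : ℝ)| := by exact_mod_cast this
    linarith
  have h4 : |(j : ℝ)| / 2 * h / 2 ≤ ‖Complex.cosh (z + (j + 1) * h)‖ := by
    push_cast at h2 h3
    refine le_trans ?_ h2
    gcongr
  rw [w, norm_div, norm_mul, Complex.norm_real, Real.norm_of_nonneg hK.le]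
  calc K / (‖Complex.cosh (z + j * h)‖ * ‖Complex.cosh (z + (j + 1) * h)‖)
      ≤ K / ((|(j : ℝ)| * h / 2) * (|(j : ℝ)| / 2 * h / 2)) := by gcongr
    _ = 8 * K / h ^ 2 * (1 / |(j : ℝ)| ^ 2) := by field_simp; norm_num
    _ = _ := by rw [sq_abs]

lemma r_bound {K h : ℝ} (hK : 0 < K) (hh : 0 < h) {z : ℂ} (hz : |z.re| < h / 2) (j : ℤ) :
    ‖r K h j z‖ ≤ (2 * (8 * K / h ^ 2) + (8 * K / h ^ 2) ^ 2) * (1 / (j : ℝ) ^ 2) := by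
  unfold r
  split_ifs with hj
  · rw [norm_zero]; positivity
  push Not at hj
  have h1 := w_bound hK hh hz hj.1 hj.2
  set D := 8 * K / h ^ 2
  have hD : 0 < D := by positivity
  have hq : 1 / (j : ℝ) ^ 2 ≤ 1 := by
    have hj1 : (1 : ℝ) ≤ |(j : ℝ)| := by exact_mod_cast Int.one_le_abs hj.1
    rw [← sq_abs]
    apply div_le_one_of_le₀ _ (by positivity)
    nlinarith
  have hq0 : 0 ≤ 1 / (j : ℝ) ^ 2 := by positivity
  set q := 1 / (j : ℝ) ^ 2
  unfold t
  have h2 : ‖2 * w K h j z - w K h j z ^ 2‖ ≤ 2 * ‖w K h j z‖ + ‖w K h j z‖ ^ 2 := by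
    refine (norm_sub_le _ _).trans ?_
    simp
  have h3 : ‖w K h j z‖ ^ 2 ≤ (D * q) ^ 2 := by gcongr
  have h4 : q ^ 2 ≤ q := by nlinarith
  nlinarith [mul_le_mul_of_nonneg_left h4 (sq_nonneg D)]

lemma bound_summable (C : ℝ) : Summable fun j : ℤ => C * (1 / (j : ℝ) ^ 2) :=
  (Real.summable_one_div_int_pow.2 (by norm_num)).mul_left C

lemma strip_open (h : ℝ) : IsOpen {z : ℂ | |z.re| < h / 2} :=
  isOpen_lt (by fun_prop) (by fun_prop)

lemma strip_convex (h : ℝ) : Convex ℝ {z : ℂ | |z.re| < h / 2} := by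
  have : {z : ℂ | |z.re| < h / 2} = Complex.reLm ⁻¹' (Set.Ioo (-(h / 2)) (h / 2)) := by
    ext z; simp [abs_lt]
  rw [this]
  exact (convex_Ioo _ _).linear_preimage _

lemma G_diff {K h : ℝ} (hK : 0 < K) (hh : 0 < h) :
    DifferentiableOn ℂ (fun z => ∑' j : ℤ, r K h j z) {z : ℂ | |z.re| < h / 2} := by
  refine differentiableOn_tsum_of_summable_norm (bound_summable _) (fun j => ?_) (strip_open h)
    (fun j z hz => r_bound hK hh hz j)
  unfold r
  split_ifs with hj
  · fun_prop
  push Not at hj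
  intro z hz
  have h1 := cosh_ne hh hz hj.1
  have h2 := cosh_ne hh hz (j := j + 1) (by omega)
  push_cast at h2
  have h3 := mul_ne_zero h1 h2
  unfold t w
  apply DifferentiableAt.differentiableWithinAt
  fun_prop (disch := assumption)

lemma tsum_t {K h : ℝ} (hK : 0 < K) (hh : 0 < h) {z : ℂ} (hz : |z.re| < h / 2) :
    ∑' j : ℤ, t K h j z = t K h 0 z + t K h (-1) z + ∑' j : ℤ, r K h j z := by
  have hs : Summable fun j : ℤ => r K h j z :=
    Summable.of_norm_bounded (bound_summable _) (fun j => r_bound hK hh hz j)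
  have h2 : HasSum (fun j : ℤ => if j ∈ ({0, -1} : Finset ℤ) then t K h j z else 0)
      (∑ j ∈ ({0, -1} : Finset ℤ), (if j ∈ ({0, -1} : Finset ℤ) then t K h j z else 0)) :=
    hasSum_sum_of_ne_finset_zero (fun j hj => if_neg hj)
  have h3 := (h2.add hs.hasSum).tsum_eq
  have h4 : ∑ j ∈ ({0, -1} : Finset ℤ), (if j ∈ ({0, -1} : Finset ℤ) then t K h j z else 0)
    = t K h 0 z + t K h (-1) z := by
    rw [Finset.sum_pair (by norm_num)]; simp
  rw [h4] at h3
  rw [← h3]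
  congr 1
  ext j
  unfold r
  by_cases hj : j = 0 ∨ j = -1
  · simp [hj]
  · simp [hj]

lemma main {K h : ℝ} (hK : 0 < K) (hh : 0 < h) (c : ℂ)
    (hc : ∀ x : ℝ, ∑' j : ℤ, t K h j x = c) : False := by
  set U := {z : ℂ | |z.re| < h / 2} with hU
  set G := fun z : ℂ => ∑' j : ℤ, r K h j z with hG
  have dG : DifferentiableOn ℂ G U := G_diff hK hh
  have n1 : ∀ z ∈ U, Complex.cosh (z + h) ≠ 0 := fun z hz => by
    simpa using cosh_ne hh hz (j := 1) (by norm_num)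
  have n2 : ∀ z ∈ U, Complex.cosh (z - h) ≠ 0 := fun z hz => by
    have := cosh_ne hh hz (j := -1) (by norm_num)
    push_cast at this
    rwa [neg_one_mul, ← sub_eq_add_neg] at this
  let H : ℂ → ℂ := fun z => Complex.cosh z ^ 2 * G z
    + (2 * K * Complex.cosh z / Complex.cosh (z + h) - (K / Complex.cosh (z + h)) ^ 2)
    + (2 * K * Complex.cosh z / Complex.cosh (z - h) - (K / Complex.cosh (z - h)) ^ 2)
    - c * Complex.cosh z ^ 2
  have dH : DifferentiableOn ℂ H U := by
    intro z hz
    have m1 := n1 z hz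
    have m2 := n2 z hz
    have dGz : DifferentiableAt ℂ G z := (dG z hz).differentiableAt ((strip_open h).mem_nhds hz)
    apply DifferentiableAt.differentiableWithinAt
    simp only [H]
    fun_prop (disch := assumption)
  have zH : ∀ x : ℝ, (x : ℂ) ∈ U → H x = 0 := by
    intro x hx
    have e := tsum_t hK hh hx
    rw [hc] at e
    have m1 := n1 x hx
    have m2 := n2 x hx
    have m0 : Complex.cosh x ≠ 0 := by
      rw [← Complex.ofReal_cosh]; exact_mod_cast (Real.cosh_pos x).ne'
    simp only [H, hG]
    rw [e]
    simp only [t, w]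
    push_cast
    have e1 : (x : ℂ) + 0 * h = x := by ring
    have e2 : (x : ℂ) + (0 + 1) * h = x + h := by ring
    have e3 : (x : ℂ) + -1 * h = x - h := by ring
    have e4 : (x : ℂ) + (-1 + 1) * h = x := by ring
    rw [e1, e2, e3, e4]
    field_simp
    ring
  have h0 : (0 : ℂ) ∈ U := by simp [hU, hh]
  have aH : AnalyticOnNhd ℂ H U := dH.analyticOnNhd (strip_open h)
  have fr : ∃ᶠ z in nhdsWithin (0 : ℂ) {0}ᶜ, H z = 0 := by
    have tt : Filter.Tendsto (fun x : ℝ => (x : ℂ)) (nhdsWithin (0 : ℝ) {0}ᶜ)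
        (nhdsWithin (0 : ℂ) {0}ᶜ) := by
      apply tendsto_nhdsWithin_of_tendsto_nhds_of_eventually_within
      · have : Filter.Tendsto (fun x : ℝ => (x : ℂ)) (nhds 0) (nhds ((0 : ℝ) : ℂ)) :=
          Complex.continuous_ofReal.tendsto 0
        simpa using this.mono_left nhdsWithin_le_nhds
      · filter_upwards [self_mem_nhdsWithin] with x hx
        simpa using hx
    apply tt.frequently
    apply Filter.Eventually.frequently
    have : ∀ᶠ x : ℝ in nhds 0, (x : ℂ) ∈ U :=
      Complex.continuous_ofReal.continuousAt.eventually
        ((strip_open h).mem_nhds (by simp [hU, hh]))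
    filter_upwards [nhdsWithin_le_nhds this] with x hx using zH x hx
  have key := aH.eqOn_zero_of_preconnected_of_frequently_eq_zero
    (strip_convex h).isPreconnected h0 fr
  have hp : ((Real.pi / 2 : ℝ) * Complex.I) ∈ U := by simp [hU, hh]
  have k := key hp
  have c0 : Complex.cosh ((Real.pi / 2 : ℝ) * Complex.I) = 0 := by
    rw [Complex.cosh_mul_I]; simp
  have s0 : Complex.sinh ((Real.pi / 2 : ℝ) * Complex.I) = Complex.I := by
    rw [Complex.sinh_mul_I]; simp
  simp only [H, Complex.cosh_add, Complex.cosh_sub, c0, s0, Pi.zero_apply] at k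
  have hs : Complex.sinh h ≠ 0 := by
    rw [← Complex.ofReal_sinh]; exact_mod_cast (Real.sinh_pos_iff.2 hh).ne'
  have hKc : (K : ℂ) ≠ 0 := by exact_mod_cast hK.ne'
  have : (2 : ℂ) * (K / Complex.sinh h) ^ 2 = 0 := by
    rw [← k]
    simp only [div_pow, mul_pow, Complex.I_sq, zero_mul, zero_sub, zero_add, neg_sq]
    field_simp
    ring
  have h2 : (K : ℂ) / Complex.sinh h ≠ 0 := div_ne_zero hKc hs
  exact absurd this (mul_ne_zero two_ne_zero (pow_ne_zero _ h2))

lemma mu_eq {a b h : ℝ} (hb : 0 < b) (hab : b < a)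
    (hsinh : Real.sinh (h / 2) = Real.sqrt (a ^ 2 - b ^ 2) / b) (s : ℝ) :
    a / b ^ 3 - a * b / (a ^ 2 * (1 / Real.cosh s) ^ 2 + b ^ 2 * Real.tanh s ^ 2) ^ 2
     = a / b ^ 3 * (2 * (Real.sinh (h / 2) ^ 2 / (Real.cosh (s - h / 2) * Real.cosh (s + h / 2)))
        - (Real.sinh (h / 2) ^ 2 / (Real.cosh (s - h / 2) * Real.cosh (s + h / 2))) ^ 2) := by
  have ha : a ^ 2 = b ^ 2 * (1 + Real.sinh (h / 2) ^ 2) := by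
    rw [hsinh, div_pow, Real.sq_sqrt (by nlinarith)]
    field_simp
    ring
  have hp : Real.cosh (s - h / 2) * Real.cosh (s + h / 2)
      = Real.cosh s ^ 2 + Real.sinh (h / 2) ^ 2 := by
    rw [Real.cosh_sub, Real.cosh_add]
    have h1 := Real.cosh_sq s
    have h2 := Real.cosh_sq (h / 2)
    have : (Real.cosh s * Real.cosh (h / 2) - Real.sinh s * Real.sinh (h / 2)) *
      (Real.cosh s * Real.cosh (h / 2) + Real.sinh s * Real.sinh (h / 2)) =
      Real.cosh s ^ 2 * Real.cosh (h / 2) ^ 2 - Real.sinh s ^ 2 * Real.sinh (h / 2) ^ 2 := by ring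
    rw [this, h2, h1]; ring
  have hc := Real.cosh_pos s
  have hd : a ^ 2 * (1 / Real.cosh s) ^ 2 + b ^ 2 * Real.tanh s ^ 2
      = b ^ 2 * (Real.cosh s ^ 2 + Real.sinh (h / 2) ^ 2) / Real.cosh s ^ 2 := by
    rw [ha, Real.tanh_eq_sinh_div_cosh, div_pow, div_pow, Real.sinh_sq s]
    field_simp
    ring
  rw [hd, hp]
  have : 0 < Real.cosh s ^ 2 + Real.sinh (h / 2) ^ 2 := by positivity
  field_simp
  ring

end HP

/-- The homoclinic Melnikov potential `L̂₁(s) = 2b Σ_{j∈ℤ} μ̂₁(s + jh)` is not constant. -/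
theorem homoclinic_potential_not_constant (a b h : ℝ) (hb : 0 < b) (hab : b < a)
    (hh : 0 < h)
    (hsinh : Real.sinh (h / 2) = Real.sqrt (a ^ 2 - b ^ 2) / b)
    (μ L : ℝ → ℝ)
    (hμ : μ = fun s => a / b ^ 3 -
      a * b / (a ^ 2 * (1 / Real.cosh s) ^ 2 + b ^ 2 * Real.tanh s ^ 2) ^ 2)
    (hL : L = fun s => 2 * b * ∑' j : ℤ, μ (s + j * h)) :
    ∃ s₁ s₂ : ℝ, L s₁ ≠ L s₂ := by
  by_contra! hcon
  have ha : 0 < a := hb.trans hab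
  have hK : 0 < Real.sinh (h / 2) ^ 2 := by
    have := Real.sinh_pos_iff.2 (half_pos hh)
    positivity
  have hC : (2 * b * (a / b ^ 3) : ℝ) ≠ 0 := by positivity
  refine HP.main hK hh ((L 0 / (2 * b * (a / b ^ 3)) : ℝ) : ℂ) (fun x => ?_)
  rw [← hcon (x + h / 2) 0, hL]
  simp only [hμ]
  simp_rw [HP.mu_eq hb hab hsinh]
  rw [tsum_mul_left, ← mul_assoc, mul_div_cancel_left₀ _ hC, Complex.ofReal_tsum]
  congr 1
  ext j
  have e1 : x + h / 2 + j * h - h / 2 = x + j * h := by ring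
  have e2 : x + h / 2 + j * h + h / 2 = x + (j + 1) * h := by ring
  rw [e1, e2]
  simp only [HP.t, HP.w]
  push_cast
  rfl
end

section
/- Let 0 < b < a be real numbers, let h > 0 be determined by sinh(h/2) = √(a² − b²)/b, let μ̂₁(s) = a/b³ − ab/(a² sech² s + b² tanh² s)², and define L̂₁ : ℝ → ℝ by L̂₁(s) = 2b·Σ_{j∈ℤ} μ̂₁(s + jh). Then L̂₁ is smooth, its set of real critical points is exactly (h/2)·ℤ = {j·h/2 : j ∈ ℤ} (i.e. L̂₁'(s) = 0 if and only if 2s/h ∈ ℤ), and every critical point is nondegenerate: L̂₁''(s) ≠ 0 whenever 2s/h ∈ ℤ. -/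
namespace Homo
open Real Filter Topology

noncomputable def sc (x : ℝ) : ℝ := (cosh x)⁻¹

lemma sc_pos (x : ℝ) : 0 < sc x := inv_pos.2 (cosh_pos x)

lemma sc_le_one (x : ℝ) : sc x ≤ 1 := inv_le_one_of_one_le₀ (one_le_cosh x)

lemma sc_le (x : ℝ) : sc x ≤ 2 * exp (-|x|) := by
  have h1 : exp |x| / 2 ≤ cosh x := by
    rw [← cosh_abs x, cosh_eq]
    have := exp_pos (-|x|)
    linarith
  have h2 := inv_anti₀ (by positivity) h1
  rw [exp_neg]
  unfold sc
  calc _ ≤ _ := h2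
    _ = _ := by rw [inv_div]; rfl

noncomputable def u (h R : ℝ) (j : ℤ) : ℝ := 2 * exp R * exp (-(h * |(j : ℝ)|))

lemma summable_u {h : ℝ} (hh : 0 < h) (R : ℝ) : Summable (u h R) := by
  apply Summable.mul_left
  have key : Summable (fun n : ℕ => exp (-(h * (n : ℝ)))) := by
    have := Real.summable_exp_nat_mul_iff.2 (neg_neg_of_pos hh)
    refine this.congr fun n => ?_
    congr 1; ring
  apply Summable.of_nat_of_neg
  · simpa using key
  · simpa using key

lemma sc_le_u {h : ℝ} (hh : 0 < h) {R x : ℝ} (hx : |x| ≤ R) (j : ℤ) :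
    sc (x + j * h) ≤ u h R j := by
  refine (sc_le _).trans ?_
  unfold u
  rw [mul_assoc, ← exp_add]
  have : |(j : ℝ) * h| ≤ |x + j * h| + |x| := by
    have := abs_sub (x + j * h) x
    simpa using this
  rw [abs_mul, abs_of_pos hh] at this
  gcongr
  linarith

lemma summable_sc {h : ℝ} (hh : 0 < h) (x : ℝ) : Summable (fun j : ℤ => sc (x + j * h)) :=
  Summable.of_nonneg_of_le (fun _ => (sc_pos _).le) (fun j => sc_le_u hh le_rfl j) (summable_u hh |x|)

lemma hasDerivAt_sc (x : ℝ) : HasDerivAt sc (-(sc x * tanh x)) x := by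
  have := (hasDerivAt_cosh x).inv (cosh_pos x).ne'
  refine this.congr_deriv ?_
  rw [tanh_eq_sinh_div_cosh]; unfold sc
  have := (cosh_pos x).ne'
  field_simp

lemma tanh_sq' (x : ℝ) : tanh x ^ 2 = 1 - sc x ^ 2 := by
  rw [tanh_eq_sinh_div_cosh]; unfold sc
  have := (cosh_pos x).ne'
  field_simp
  have := cosh_sq x
  linarith

lemma hasDerivAt_tanh' (x : ℝ) : HasDerivAt tanh (sc x ^ 2) x := by
  have := (hasDerivAt_sinh x).div (hasDerivAt_cosh x) (cosh_pos x).ne'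
  have e : tanh = (fun y => sinh y / cosh y) := by
    funext y; exact tanh_eq_sinh_div_cosh y
  rw [e]
  refine this.congr_deriv ?_
  unfold sc
  have h0 := (cosh_pos x).ne'
  have := cosh_sq x
  field_simp
  linarith

lemma abs_tanh_le (x : ℝ) : |tanh x| ≤ 1 := by
  rw [← sq_le_one_iff_abs_le_one, tanh_sq']
  have := sq_nonneg (sc x); linarith

lemma hasDerivAt_sc1 (x : ℝ) :
    HasDerivAt (fun y => -(sc y * tanh y)) (sc x - 2 * sc x ^ 3) x := by
  have := ((hasDerivAt_sc x).mul (hasDerivAt_tanh' x)).neg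
  refine this.congr_deriv ?_
  have := tanh_sq' x
  linear_combination (sc x) * this

noncomputable def gd (x : ℝ) : ℝ := arctan (sinh x)

lemma hasDerivAt_gd (x : ℝ) : HasDerivAt gd (sc x) x := by
  have := (hasDerivAt_arctan (sinh x)).comp x (hasDerivAt_sinh x)
  refine this.congr_deriv ?_
  unfold sc
  have h0 := (cosh_pos x).ne'
  have := cosh_sq x
  rw [show 1 + sinh x ^ 2 = cosh x ^ 2 by linarith]
  field_simp

/-- termwise differentiation -/
lemma deriv_sum {h : ℝ} (hh : 0 < h) {f f' : ℝ → ℝ} (C : ℝ) (c : ℤ → ℝ)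
    (hf : ∀ x, HasDerivAt f (f' x) x) (hb : ∀ x, |f' x| ≤ C * sc x)
    (x0 : ℝ) (hs : Summable (fun j : ℤ => f (x0 + j * h) - c j)) :
    ∀ x, HasDerivAt (fun x => ∑' j : ℤ, (f (x + j * h) - c j)) (∑' j : ℤ, f' (x + j * h)) x
      ∧ Summable (fun j : ℤ => f (x + j * h) - c j) := by
  intro x
  have hC : 0 ≤ C := by
    have := (abs_nonneg _).trans (hb 0)
    exact nonneg_of_mul_nonneg_left this (sc_pos 0)
  set R := |x| + |x0| + 1
  have hu : Summable (fun j => C * u h R j) := (summable_u hh R).mul_left C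
  have hd : ∀ (j : ℤ) (y : ℝ), y ∈ Metric.ball (0:ℝ) R →
      HasDerivAt (fun y => f (y + j * h) - c j) (f' (y + j * h)) y := by
    intro j y _
    exact ((hf (y + j * h)).comp_add_const y (j * h)).sub_const (c j)
  have hbd : ∀ (j : ℤ) (y : ℝ), y ∈ Metric.ball (0:ℝ) R → ‖f' (y + j * h)‖ ≤ C * u h R j := by
    intro j y hy
    have hy' : |y| ≤ R := by simpa using (mem_ball_zero_iff.1 hy).le
    exact (hb _).trans (mul_le_mul_of_nonneg_left (sc_le_u hh hy' j) hC)
  have hx0 : x0 ∈ Metric.ball (0:ℝ) R := by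
    rw [mem_ball_zero_iff, norm_eq_abs]; have := abs_nonneg x; simp only [R]; linarith
  have hx : x ∈ Metric.ball (0:ℝ) R := by
    rw [mem_ball_zero_iff, norm_eq_abs]; have := abs_nonneg x0; simp only [R]; linarith
  have hpc := (convex_ball (0:ℝ) R).isPreconnected
  exact ⟨hasDerivAt_tsum_of_isPreconnected hu Metric.isOpen_ball hpc hd hbd hx0 hs hx,
    summable_of_summable_hasDerivAt_of_isPreconnected hu Metric.isOpen_ball hpc hd hbd hx0 hs hx⟩

noncomputable def G (h x : ℝ) : ℝ := ∑' j : ℤ, sc (x + j * h)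
noncomputable def G1 (h x : ℝ) : ℝ := ∑' j : ℤ, -(sc (x + j * h) * tanh (x + j * h))
noncomputable def F (h x : ℝ) : ℝ := ∑' j : ℤ, sc (x + j * h) ^ 2
noncomputable def F3 (h x : ℝ) : ℝ := ∑' j : ℤ, sc (x + j * h) ^ 3
noncomputable def Phi (h x : ℝ) : ℝ := ∑' j : ℤ, (gd (x + j * h) - gd (j * h))

lemma sc1_bound (x : ℝ) : |(-(sc x * tanh x))| ≤ 1 * sc x := by
  rw [abs_neg, abs_mul, abs_of_pos (sc_pos x), one_mul]
  exact mul_le_of_le_one_right (sc_pos x).le (abs_tanh_le x)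

lemma summable_sc1 {h : ℝ} (hh : 0 < h) (x : ℝ) :
    Summable (fun j : ℤ => -(sc (x + j * h) * tanh (x + j * h))) :=
  Summable.of_norm_bounded (summable_sc hh x) (fun j => by simpa using sc1_bound (x + j * h))

lemma summable_sc_pow {h : ℝ} (hh : 0 < h) (x : ℝ) (n : ℕ) :
    Summable (fun j : ℤ => sc (x + j * h) ^ (n + 1)) :=
  Summable.of_nonneg_of_le (fun j => (pow_pos (sc_pos _) _).le)
    (fun j => by
      rw [pow_succ]
      exact mul_le_of_le_one_left (sc_pos _).le (pow_le_one₀ (sc_pos _).le (sc_le_one _)))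
    (summable_sc hh x)

lemma hasDerivAt_G {h : ℝ} (hh : 0 < h) (x : ℝ) : HasDerivAt (G h) (G1 h x) x := by
  have := (deriv_sum hh 1 (fun _ => 0) hasDerivAt_sc sc1_bound 0
    (by simpa using summable_sc hh 0) x).1
  simp only [sub_zero] at this
  exact this

lemma hasDerivAt_G1 {h : ℝ} (hh : 0 < h) (x : ℝ) :
    HasDerivAt (G1 h) (G h x - 2 * F3 h x) x := by
  have := (deriv_sum hh 3 (fun _ => 0) hasDerivAt_sc1 (fun x => ?_) 0
    (by simpa using summable_sc1 hh 0) x).1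
  · have e : G h x - 2 * F3 h x = ∑' j : ℤ, (sc (x + j * h) - 2 * sc (x + j * h) ^ 3) := by
      rw [Summable.tsum_sub (summable_sc hh x) ((summable_sc_pow hh x 2).mul_left 2), tsum_mul_left]
      rfl
    rw [e]
    simp only [sub_zero] at this
    exact this
  · have h1 := sc_pos x
    have h2 := sc_le_one x
    have h3 : sc x ^ 2 ≤ 1 := pow_le_one₀ h1.le h2
    have : sc x ^ 3 ≤ sc x := by nlinarith
    have : 0 < sc x ^ 3 := by positivity
    rw [abs_le]; constructor <;> linarith

lemma phi_aux {h : ℝ} (hh : 0 < h) (x : ℝ) : HasDerivAt (Phi h) (G h x) x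
      ∧ Summable (fun j : ℤ => gd (x + j * h) - gd (j * h)) :=
  deriv_sum hh 1 (fun j => gd (j * h)) hasDerivAt_gd
    (fun x => by rw [abs_of_pos (sc_pos x), one_mul]) 0 (by simp) x

lemma G_pos {h : ℝ} (hh : 0 < h) (x : ℝ) : 0 < G h x :=
  (summable_sc hh x).tsum_pos (fun _ => (sc_pos _).le) 0 (sc_pos _)

lemma tele_nat {g : ℕ → ℝ} {l : ℝ} (s : Summable (fun n => g (n + 1) - g n))
    (h1 : Tendsto g atTop (𝓝 l)) : HasSum (fun n => g (n + 1) - g n) (l - g 0) := by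
  have t := s.hasSum.tendsto_sum_nat
  simp_rw [Finset.sum_range_sub] at t
  have := tendsto_nhds_unique t (h1.sub_const (g 0))
  rw [← this]
  exact s.hasSum

lemma telescope {f : ℤ → ℝ} {l l' : ℝ} (hs : Summable (fun j => f (j + 1) - f j))
    (h1 : Tendsto f atTop (𝓝 l)) (h2 : Tendsto f atBot (𝓝 l')) :
    HasSum (fun j => f (j + 1) - f j) (l - l') := by
  set F : ℤ → ℝ := fun j => f (j + 1) - f j with hF
  have A : HasSum (fun n : ℕ => F n) (l - f 0) := by
    have s : Summable (fun n : ℕ => F n) :=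
      hs.comp_injective (i := fun n : ℕ => (n : ℤ)) Nat.cast_injective
    have h1' : Tendsto (fun n : ℕ => f n) atTop (𝓝 l) := h1.comp tendsto_natCast_atTop_atTop
    have e : (fun n : ℕ => F n) = fun n : ℕ => f ((n + 1 : ℕ) : ℤ) - f (n : ℤ) := by
      funext n; simp [hF]
    rw [e] at s ⊢
    exact tele_nat (g := fun n : ℕ => f n) s h1'
  have B : HasSum (fun n : ℕ => F (-((n : ℤ) + 1))) (f 0 - l') := by
    have s : Summable (fun n : ℕ => F (-((n : ℤ) + 1))) :=
      hs.comp_injective (i := fun n : ℕ => (-((n : ℤ) + 1))) (fun a b hab => by simpa using hab)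
    have h2' : Tendsto (fun n : ℕ => -f (-(n : ℤ))) atTop (𝓝 (-l')) :=
      (h2.comp (tendsto_neg_atTop_atBot.comp tendsto_natCast_atTop_atTop)).neg
    have e : (fun n : ℕ => F (-((n : ℤ) + 1)))
        = fun n : ℕ => -f (-((n + 1 : ℕ) : ℤ)) - -f (-(n : ℤ)) := by
      funext n
      simp only [hF]
      rw [show -((n : ℤ) + 1) + 1 = -(n : ℤ) by ring]
      push_cast; ring
    rw [e] at s ⊢
    have := tele_nat (g := fun n : ℕ => -f (-(n : ℤ))) s h2'
    rw [show f 0 - l' = -l' - -f (-((0 : ℕ) : ℤ)) by simp; ring]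
    exact this
  have := HasSum.of_nat_of_neg_add_one (f := F) A B
  rwa [sub_add_sub_cancel] at this

lemma telescope_m {f : ℤ → ℝ} {c : ℝ} (hs : HasSum (fun j => f (j + 1) - f j) c) (m : ℤ) :
    HasSum (fun j => f (j + m) - f j) (m * c) := by
  induction m using Int.induction_on with
  | zero => simp
  | succ i ih =>
    have s2 := ((Equiv.addRight (i : ℤ)).hasSum_iff.2 hs).add ih
    convert s2 using 1
    · funext j; simp [add_assoc]
    · push_cast; ring
  | pred i ih =>
    have s2 := ih.sub ((Equiv.addRight (-(i : ℤ) - 1)).hasSum_iff.2 hs)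
    have e : ((-(i : ℤ) - 1 : ℤ) : ℝ) * c = ((-(i : ℤ) : ℤ) : ℝ) * c - c := by push_cast; ring
    rw [e]
    refine s2.congr_fun ?_
    intro j
    simp only [Function.comp, Equiv.coe_addRight]
    rw [show j + (-(i:ℤ) - 1) + 1 = j + -i by ring]; ring

lemma tendsto_lin_top {h : ℝ} (hh : 0 < h) (x : ℝ) :
    Tendsto (fun j : ℤ => x + j * h) atTop atTop :=
  tendsto_atTop_add_const_left _ _ (tendsto_intCast_atTop_atTop.atTop_mul_const hh)

lemma tendsto_lin_bot {h : ℝ} (hh : 0 < h) (x : ℝ) :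
    Tendsto (fun j : ℤ => x + j * h) atBot atBot := by
  have : Tendsto (fun j : ℤ => (j : ℝ)) atBot atBot := by
    simpa using (tendsto_intCast_atBot_iff (R := ℝ) (f := fun j : ℤ => j) (l := atBot)).2 tendsto_id
  exact tendsto_atBot_add_const_left _ _ (this.atBot_mul_const hh)

lemma sinh_top : Tendsto sinh atTop atTop :=
  tendsto_atTop_mono' _ (by
    filter_upwards [eventually_ge_atTop 0] with x hx using self_le_sinh_iff.2 hx) tendsto_id

lemma sinh_bot : Tendsto sinh atBot atBot :=
  tendsto_atBot_mono' _ (by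
    filter_upwards [eventually_le_atBot 0] with x hx using sinh_le_self_iff.2 hx) tendsto_id

lemma tanh_top : Tendsto tanh atTop (𝓝 1) := by
  have h1 : Tendsto (fun x : ℝ => 1 - exp (-x)) atTop (𝓝 1) := by
    simpa using (tendsto_exp_neg_atTop_nhds_zero).const_sub 1
  refine tendsto_of_tendsto_of_tendsto_of_le_of_le h1 tendsto_const_nhds (fun x => ?_) (fun x => ?_)
  · have e : tanh x = 1 - exp (-x) * sc x := by
      rw [tanh_eq_sinh_div_cosh]; unfold sc
      have := (cosh_pos x).ne'
      field_simp
      rw [← cosh_sub_sinh]; ring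
    have := mul_le_of_le_one_right (exp_pos (-x)).le (sc_le_one x)
    simp only [e]; linarith
  · exact (abs_le.1 (abs_tanh_le x)).2

lemma tanh_bot : Tendsto tanh atBot (𝓝 (-1)) := by
  have := (tanh_top.comp tendsto_neg_atBot_atTop).neg
  refine this.congr fun x => ?_
  simp [tanh_neg]

lemma gd_top : Tendsto gd atTop (𝓝 (π / 2)) :=
  (tendsto_arctan_atTop.mono_right nhdsWithin_le_nhds).comp sinh_top

lemma gd_bot : Tendsto gd atBot (𝓝 (-(π / 2))) :=
  (tendsto_arctan_atBot.mono_right nhdsWithin_le_nhds).comp sinh_bot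

lemma gd_neg (x : ℝ) : gd (-x) = -gd x := by simp [gd]

lemma tanh_sub_tanh (x d : ℝ) : tanh (x + d) - tanh x = sinh d * (sc x * sc (x + d)) := by
  rw [tanh_eq_sinh_div_cosh, tanh_eq_sinh_div_cosh]; unfold sc
  have h1 := (cosh_pos x).ne'
  have h2 := (cosh_pos (x + d)).ne'
  field_simp
  rw [sinh_add, cosh_add]
  linear_combination (sinh d) * cosh_sq x

lemma summable_sc_mul {h : ℝ} (hh : 0 < h) (x d : ℝ) :
    Summable (fun j : ℤ => sc (x + j * h) * sc (x + j * h + d)) :=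
  Summable.of_nonneg_of_le (fun _ => (mul_pos (sc_pos _) (sc_pos _)).le)
    (fun _ => mul_le_of_le_one_right (sc_pos _).le (sc_le_one _)) (summable_sc hh x)

lemma hasSum_tanh {h : ℝ} (hh : 0 < h) (x : ℝ) (m : ℤ) :
    HasSum (fun j : ℤ => tanh (x + j * h + m * h) - tanh (x + j * h)) (m * 2) := by
  have e : ∀ j k : ℤ, x + j * h + k * h = x + ((j + k : ℤ) : ℝ) * h := by
    intro j k; push_cast; ring
  have hs : Summable (fun j : ℤ => tanh (x + ((j + 1 : ℤ) : ℝ) * h) - tanh (x + j * h)) := by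
    have := (summable_sc_mul hh x h).mul_left (sinh h)
    refine this.congr fun j => ?_
    rw [← tanh_sub_tanh]; congr 2; push_cast; ring
  have := telescope (f := fun j : ℤ => tanh (x + j * h)) hs
    (tanh_top.comp (tendsto_lin_top hh x)) (tanh_bot.comp (tendsto_lin_bot hh x))
  rw [show (1 : ℝ) - -1 = 2 by norm_num] at this
  simp only [e]
  exact telescope_m (f := fun j : ℤ => tanh (x + j * h)) this m

lemma sinh_ne {h : ℝ} (hh : 0 < h) {m : ℤ} (hm : m ≠ 0) : sinh (m * h) ≠ 0 := by
  rw [Ne, sinh_eq_zero]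
  exact mul_ne_zero (by exact_mod_cast hm) hh.ne'

lemma hasSum_sc_mul {h : ℝ} (hh : 0 < h) (x : ℝ) {m : ℤ} (hm : m ≠ 0) :
    HasSum (fun j : ℤ => sc (x + j * h) * sc (x + j * h + m * h)) (m * 2 / sinh (m * h)) := by
  refine ((hasSum_tanh hh x m).div_const (sinh (m * h))).congr_fun fun j => ?_
  rw [tanh_sub_tanh]
  have := sinh_ne hh hm
  field_simp

/-- product of two periodised sums, reorganised along diagonals -/
lemma diag {p q : ℤ → ℝ} (hp : Summable p) (hq : Summable q) (hp0 : ∀ j, 0 ≤ p j)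
    (hq0 : ∀ j, 0 ≤ q j) :
    HasSum (fun m : ℤ => ∑' j : ℤ, p j * q (j + m)) ((∑' j, p j) * ∑' j, q j) := by
  have hs : Summable (fun z : ℤ × ℤ => p z.1 * q z.2) := hp.mul_of_nonneg hq hp0 hq0
  have hS := hp.hasSum.mul hq.hasSum hs
  let e : ℤ × ℤ ≃ ℤ × ℤ :=
    { toFun := fun z => (z.2, z.2 + z.1)
      invFun := fun z => (z.2 - z.1, z.1)
      left_inv := fun z => by simp
      right_inv := fun z => by simp }
  have h2 := (e.hasSum_iff).2 hS
  have h3 : Summable (fun z : ℤ × ℤ => p z.2 * q (z.2 + z.1)) := h2.summable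
  exact HasSum.prod_fiberwise h2 (fun m => (h3.prod_factor m).hasSum)

noncomputable def c0 (h : ℝ) : ℝ := ∑' m : ℤ, (m * 2 / sinh (m * h) : ℝ)
noncomputable def c1 (h : ℝ) : ℝ := ∑' m : ℤ, ((cosh (m * h) - 1) / sinh (m * h) ^ 2 : ℝ)

lemma G_sq {h : ℝ} (hh : 0 < h) (x : ℝ) : G h x ^ 2 = F h x + c0 h := by
  have D := diag (summable_sc hh x) (summable_sc hh x) (fun j => (sc_pos _).le) (fun j => (sc_pos _).le)
  have e : ∀ m : ℤ, ∑' j : ℤ, sc (x + j * h) * sc (x + ((j + m : ℤ) : ℝ) * h)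
      = (if m = 0 then F h x else 0) + m * 2 / sinh (m * h) := by
    intro m
    by_cases hm : m = 0
    · subst hm; simp [F, sq]
    · rw [if_neg hm, zero_add, ← (hasSum_sc_mul hh x hm).tsum_eq]
      refine tsum_congr fun j => ?_
      congr 2; push_cast; ring
  simp_rw [e] at D
  have D0 : HasSum (fun m : ℤ => if m = 0 then F h x else 0) (F h x) := hasSum_ite_eq 0 (F h x)
  have D1 := D.sub D0
  simp only [add_sub_cancel_left] at D1
  have := D1.tsum_eq
  unfold c0
  rw [this]
  unfold G; ring

lemma sc_sq_mul (x d : ℝ) (hd : sinh d ≠ 0) : sc x ^ 2 * sc (x + d) =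
    (cosh d / sinh d ^ 2) * sc x - (1 / sinh d ^ 2) * sc (x + d)
      + (1 / sinh d) * (-(sc x * tanh x)) := by
  rw [tanh_eq_sinh_div_cosh]; unfold sc
  have h1 := (cosh_pos x).ne'
  have h2 := (cosh_pos (x + d)).ne'
  field_simp
  rw [cosh_add]
  linear_combination (-sinh d ^ 2) * cosh_sq x - cosh x ^ 2 * cosh_sq d

lemma G_shift (h x : ℝ) (m : ℤ) : (∑' j : ℤ, sc (x + j * h + m * h)) = G h x := by
  unfold G
  rw [← (Equiv.addRight m).tsum_eq (fun j : ℤ => sc (x + j * h))]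
  refine tsum_congr fun j => ?_
  congr 1; simp; ring

lemma hasSum_sc_sq_mul {h : ℝ} (hh : 0 < h) (x : ℝ) {m : ℤ} (hm : m ≠ 0) :
    HasSum (fun j : ℤ => sc (x + j * h) ^ 2 * sc (x + j * h + m * h))
      ((cosh (m * h) - 1) / sinh (m * h) ^ 2 * G h x + 1 / sinh (m * h) * G1 h x) := by
  have A := (summable_sc hh x).hasSum
  have B : HasSum (fun j : ℤ => sc (x + j * h + m * h)) (G h x) := by
    rw [← G_shift h x m]
    refine Summable.hasSum ((summable_sc hh (x + m * h)).congr fun j => ?_)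
    congr 1; ring
  have C := (summable_sc1 hh x).hasSum
  have E := ((A.mul_left (cosh (m * h) / sinh (m * h) ^ 2)).sub
    (B.mul_left (1 / sinh (m * h) ^ 2))).add (C.mul_left (1 / sinh (m * h)))
  have e2 : (cosh (m * h) - 1) / sinh (m * h) ^ 2 * G h x + 1 / sinh (m * h) * G1 h x =
    cosh (m * h) / sinh (m * h) ^ 2 * G h x - 1 / sinh (m * h) ^ 2 * G h x
      + 1 / sinh (m * h) * G1 h x := by ring
  rw [e2]
  exact E.congr_fun fun j => sc_sq_mul _ _ (sinh_ne hh hm)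

lemma G_F {h : ℝ} (hh : 0 < h) (x : ℝ) : F h x * G h x = F3 h x + c1 h * G h x := by
  have D := diag (summable_sc_pow hh x 1) (summable_sc hh x)
    (fun j => (pow_pos (sc_pos _) _).le) (fun j => (sc_pos _).le)
  set J : ℤ → ℝ := fun m =>
    (cosh (m * h) - 1) / sinh (m * h) ^ 2 * G h x + 1 / sinh (m * h) * G1 h x with hJ
  have e : ∀ m : ℤ, ∑' j : ℤ, sc (x + j * h) ^ (1 + 1) * sc (x + ((j + m : ℤ) : ℝ) * h)
      = (if m = 0 then F3 h x else 0) + J m := by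
    intro m
    by_cases hm : m = 0
    · subst hm; simp [F3, hJ, pow_succ]
    · rw [if_neg hm, zero_add, show J m = _ from (hasSum_sc_sq_mul hh x hm).tsum_eq.symm]
      refine tsum_congr fun j => ?_
      congr 2; push_cast; ring
  simp_rw [e] at D
  have D0 : HasSum (fun m : ℤ => if m = 0 then F3 h x else 0) (F3 h x) := hasSum_ite_eq 0 (F3 h x)
  have D1 := D.sub D0
  simp only [add_sub_cancel_left] at D1
  have D2 := ((Equiv.neg ℤ).hasSum_iff).2 D1
  have D3 := (D1.add D2).tsum_eq
  have e3 : ∀ m : ℤ, J m + (J ∘ (Equiv.neg ℤ)) m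
      = ((cosh (m * h) - 1) / sinh (m * h) ^ 2) * (2 * G h x) := by
    intro m
    simp only [hJ, Function.comp, Equiv.neg_apply, Int.cast_neg, neg_mul, cosh_neg, sinh_neg]
    rw [div_neg, neg_sq]; ring
  simp_rw [e3] at D3
  rw [tsum_mul_right] at D3
  change c1 h * _ = (F h x * G h x) - _ + (F h x * G h x - _) at D3
  linarith

lemma G_ode {h : ℝ} (hh : 0 < h) (x : ℝ) : HasDerivAt (G1 h)
    (-2 * G h x * (G h x ^ 2 - (c0 h + c1 h + 1 / 2))) x := by
  refine (hasDerivAt_G1 hh x).congr_deriv ?_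
  have h1 := G_sq hh x
  have h2 := G_F hh x
  rw [h1]
  linear_combination 2 * h2

lemma Phi_add {h : ℝ} (hh : 0 < h) (x : ℝ) : Phi h (x + h) = Phi h x + π := by
  have s1 := (phi_aux hh (x + h)).2
  have s2 := (phi_aux hh x).2
  have e : ∀ j : ℤ, gd (x + h + j * h) = gd (x + ((j + 1 : ℤ) : ℝ) * h) := by
    intro j; congr 1; push_cast; ring
  have s3 := s1.sub s2
  have E : Phi h (x + h) - Phi h x = ∑' j : ℤ, (gd (x + ((j + 1 : ℤ) : ℝ) * h) - gd (x + j * h)) := by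
    unfold Phi
    rw [← s1.tsum_sub s2]
    refine tsum_congr fun j => ?_
    rw [e]; ring
  have s4 : Summable (fun j : ℤ => gd (x + ((j + 1 : ℤ) : ℝ) * h) - gd (x + j * h)) := by
    refine s3.congr fun j => ?_
    rw [e]; ring
  have := telescope (f := fun j : ℤ => gd (x + j * h)) s4
    (gd_top.comp (tendsto_lin_top hh x)) (gd_bot.comp (tendsto_lin_bot hh x))
  rw [this.tsum_eq] at E
  linarith

lemma Phi_neg (h x : ℝ) : Phi h (-x) = -Phi h x := by
  unfold Phi
  rw [← tsum_neg, ← (Equiv.neg ℤ).tsum_eq]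
  refine tsum_congr fun j => ?_
  simp only [Equiv.neg_apply, Int.cast_neg, neg_mul]
  rw [show -x + -((j : ℝ) * h) = -(x + j * h) by ring, gd_neg, gd_neg]; ring

lemma Phi_add_int {h : ℝ} (hh : 0 < h) (x : ℝ) (n : ℤ) : Phi h (x + n * h) = Phi h x + n * π := by
  induction n using Int.induction_on with
  | zero => simp
  | succ i ih =>
    have := Phi_add hh (x + i * h)
    push_cast at *
    rw [show x + ((i:ℝ) + 1) * h = x + i * h + h by ring, this, ih]; ring
  | pred i ih =>
    have := Phi_add hh (x + (-(i:ℝ) - 1) * h)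
    push_cast at *
    rw [show x + (-(i:ℝ) - 1) * h + h = x + -i * h by ring, ih] at this
    linarith

lemma Phi_half {h : ℝ} (hh : 0 < h) (n : ℤ) : Phi h (n * h / 2) = n * π / 2 := by
  have := Phi_add_int hh (-(n * h / 2)) n
  rw [Phi_neg, show -((n : ℝ) * h / 2) + n * h = n * h / 2 by ring] at this
  linarith

lemma Phi_strictMono {h : ℝ} (hh : 0 < h) : StrictMono (Phi h) :=
  strictMono_of_deriv_pos fun x => by rw [(phi_aux hh x).1.deriv]; exact G_pos hh x

lemma G1_zero (h : ℝ) : G1 h 0 = 0 := by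
  have : G1 h 0 = -G1 h 0 := by
    conv_rhs => unfold G1
    rw [← tsum_neg, ← (Equiv.neg ℤ).tsum_eq]
    unfold G1
    refine tsum_congr fun j => ?_
    simp [sc]
  linarith

noncomputable def X (h x : ℝ) : ℝ := G h x ^ 2 - (c0 h + c1 h + 1 / 2)

lemma hasDerivAt_X {h : ℝ} (hh : 0 < h) (x : ℝ) : HasDerivAt (X h) (2 * G h x * G1 h x) x := by
  have := ((hasDerivAt_G hh x).pow 2).sub_const (c0 h + c1 h + 1 / 2)
  refine this.congr_deriv ?_
  norm_num

lemma rot {h : ℝ} (hh : 0 < h) (x : ℝ) :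
    X h x = X h 0 * cos (2 * Phi h x) ∧ G1 h x = -X h 0 * sin (2 * Phi h x) := by
  have hP : ∀ x, HasDerivAt (fun x => 2 * Phi h x) (2 * G h x) x := fun x =>
    (phi_aux hh x).1.const_mul 2
  have hc := fun x => (hP x).cos
  have hsn := fun x => (hP x).sin
  have hY := fun x => G_ode hh x
  have hX := fun x => hasDerivAt_X hh x
  have P0 : Phi h 0 = 0 := by simp [Phi]
  have U : ∀ x, X h x * cos (2 * Phi h x) - G1 h x * sin (2 * Phi h x) = X h 0 := by
    intro x
    have := is_const_of_deriv_eq_zero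
      (f := fun x => X h x * cos (2 * Phi h x) - G1 h x * sin (2 * Phi h x))
      (fun x => (((hX x).mul (hc x)).sub ((hY x).mul (hsn x))).differentiableAt)
      (fun x => by
        refine (((hX x).mul (hc x)).sub ((hY x).mul (hsn x))).deriv.trans ?_
        unfold X; ring) x 0
    simpa [P0] using this
  have V : ∀ x, X h x * sin (2 * Phi h x) + G1 h x * cos (2 * Phi h x) = 0 := by
    intro x
    have := is_const_of_deriv_eq_zero
      (f := fun x => X h x * sin (2 * Phi h x) + G1 h x * cos (2 * Phi h x))
      (fun x => (((hX x).mul (hsn x)).add ((hY x).mul (hc x))).differentiableAt)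
      (fun x => by
        refine (((hX x).mul (hsn x)).add ((hY x).mul (hc x))).deriv.trans ?_
        unfold X; ring) x 0
    simpa [P0, G1_zero] using this
  have t := sin_sq_add_cos_sq (2 * Phi h x)
  have u := U x
  have v := V x
  constructor
  · linear_combination cos (2 * Phi h x) * u + sin (2 * Phi h x) * v - X h x * t
  · linear_combination -sin (2 * Phi h x) * u + cos (2 * Phi h x) * v - G1 h x * t

lemma normSq_cosh (x y : ℝ) :
    ‖Complex.cosh (x + y * Complex.I)‖ ^ 2 = sinh x ^ 2 + cos y ^ 2 := by
  have e : Complex.cosh (x + y * Complex.I)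
      = ((cosh x * cos y : ℝ) : ℂ) + ((sinh x * sin y : ℝ) : ℂ) * Complex.I := by
    rw [Complex.cosh_add, Complex.cosh_mul_I, Complex.sinh_mul_I]; push_cast; ring
  rw [← Complex.normSq_eq_norm_sq, e, Complex.normSq_add_mul_I]
  have h1 := cosh_sq x
  have h2 := sin_sq_add_cos_sq y
  linear_combination (cos y ^ 2) * h1 + sinh x ^ 2 * h2

lemma norm_cosh_ge {x y δ : ℝ} (h0 : 0 < δ) (h : δ ^ 2 * cosh x ^ 2 ≤ sinh x ^ 2 + cos y ^ 2) :
    Complex.cosh (x + y * Complex.I) ≠ 0 ∧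
    ‖(Complex.cosh (x + y * Complex.I))⁻¹‖ ≤ δ⁻¹ * sc x := by
  have hc := cosh_pos x
  have h1 : δ * cosh x ≤ ‖Complex.cosh (x + y * Complex.I)‖ := by
    apply le_of_sq_le_sq _ (norm_nonneg _)
    rw [normSq_cosh, mul_pow]; exact h
  have h2 : 0 < δ * cosh x := by positivity
  refine ⟨norm_pos_iff.1 (h2.trans_le h1), ?_⟩
  rw [norm_inv]
  unfold sc
  rw [← mul_inv]
  exact inv_anti₀ h2 h1

noncomputable def Gc (h : ℝ) (z : ℂ) : ℂ := ∑' j : ℤ, (Complex.cosh (z + j * h))⁻¹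

lemma decomp (h : ℝ) (z : ℂ) (j : ℤ) :
    z + j * h = ((z.re + j * h : ℝ) : ℂ) + (z.im : ℂ) * Complex.I := by
  apply Complex.ext <;> simp

lemma term_bound (h : ℝ) (z : ℂ) (j : ℤ) {δ : ℝ} (h0 : 0 < δ) (hδ : δ < cos z.im) :
    Complex.cosh (z + j * h) ≠ 0 ∧
    ‖(Complex.cosh (z + j * h))⁻¹‖ ≤ δ⁻¹ * sc (z.re + j * h) := by
  rw [decomp]
  apply norm_cosh_ge h0
  have h1 : δ ≤ 1 := hδ.le.trans (cos_le_one _)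
  have h2 : δ ^ 2 ≤ cos z.im ^ 2 := pow_le_pow_left₀ h0.le hδ.le 2
  have h3 : δ ^ 2 ≤ 1 := pow_le_one₀ h0.le h1
  rw [cosh_sq]
  nlinarith [sq_nonneg (sinh (z.re + j * h))]

lemma Gc_diff {h : ℝ} (hh : 0 < h) {z : ℂ} (hz : 0 < cos z.im) : DifferentiableAt ℂ (Gc h) z := by
  obtain ⟨δ, h0, hδ⟩ := exists_between hz
  set R := |z.re| + 1
  set U : Set ℂ := {w | |w.re| < R} ∩ {w | δ < cos w.im}
  have hU : IsOpen U := by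
    apply IsOpen.inter
    · exact isOpen_lt (by fun_prop) continuous_const
    · exact isOpen_lt continuous_const (continuous_cos.comp Complex.continuous_im)
  have hzU : z ∈ U := ⟨by simp [R], hδ⟩
  have hu : Summable (fun j => δ⁻¹ * u h R j) := (summable_u hh R).mul_left _
  have : DifferentiableOn ℂ (fun w => ∑' j : ℤ, (Complex.cosh (w + j * h))⁻¹) U := by
    apply Complex.differentiableOn_tsum_of_summable_norm hu _ hU
    · intro j w hw
      exact (term_bound h w j h0 hw.2).2.trans
        (mul_le_mul_of_nonneg_left (sc_le_u hh hw.1.le j) (inv_pos.2 h0).le)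
    · intro j w hw
      apply DifferentiableAt.differentiableWithinAt
      have hd : DifferentiableAt ℂ (fun w : ℂ => Complex.cosh (w + j * h)) w := by fun_prop
      exact hd.fun_inv (term_bound h w j h0 hw.2).1
  exact this.differentiableAt (hU.mem_nhds hzU)

lemma Gc_real (h x : ℝ) : Gc h x = (G h x : ℂ) := by
  unfold Gc G sc
  push_cast
  rfl

def strip : Set ℂ := {z | -(π / 2) < z.im ∧ z.im < π / 2}

lemma strip_open : IsOpen strip :=
  (isOpen_lt continuous_const Complex.continuous_im).inter
    (isOpen_lt Complex.continuous_im continuous_const)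

lemma strip_conn : IsPreconnected strip :=
  ((convex_halfSpace_im_gt (-(π / 2))).inter (convex_halfSpace_im_lt (π / 2))).isPreconnected

lemma Gc_an {h : ℝ} (hh : 0 < h) : AnalyticOnNhd ℂ (Gc h) strip :=
  DifferentiableOn.analyticOnNhd (fun _ hz =>
    (Gc_diff hh (cos_pos_of_mem_Ioo hz)).differentiableWithinAt) strip_open

lemma real_mem (x : ℝ) : (x : ℂ) ∈ strip := by
  have := pi_pos
  constructor <;> simp <;> linarith

lemma G_smooth {h : ℝ} (hh : 0 < h) : ContDiff ℝ (⊤ : ℕ∞) (G h) := by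
  rw [contDiff_iff_contDiffAt]
  intro x
  have := ((Gc_an hh x (real_mem x)).contDiffAt (n := (⊤ : ℕ∞))).real_of_complex
  simpa [Gc_real] using this

lemma G_not_const {h : ℝ} (hh : 0 < h) (C : ℝ) (hC : ∀ x, G h x = C) : False := by
  have E : Set.EqOn (Gc h) (fun _ => (C : ℂ)) strip := by
    apply (Gc_an hh).eqOn_of_preconnected_of_frequently_eq analyticOnNhd_const strip_conn
      (real_mem 0)
    have t : Tendsto (fun x : ℝ => (x : ℂ)) (𝓝[≠] 0) (𝓝[≠] ((0 : ℝ) : ℂ)) := by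
      apply tendsto_nhdsWithin_of_tendsto_nhds_of_eventually_within
      · exact (Complex.continuous_ofReal.tendsto 0).mono_left nhdsWithin_le_nhds
      · filter_upwards [self_mem_nhdsWithin] with x hx
        simpa using hx
    apply t.frequently
    apply Filter.Eventually.frequently
    filter_upwards with x
    rw [Gc_real, hC]
  set κ := tanh h
  have hκ : 0 < κ := by
    simp only [κ]; rw [tanh_eq_sinh_div_cosh]; exact div_pos (sinh_pos_iff.2 hh) (cosh_pos h)
  set M := |C| + κ⁻¹ * G h 0
  have hM : 0 ≤ M := by
    have := G_pos hh 0
    positivity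
  set t := (M + 1)⁻¹ with ht
  have ht0 : 0 < t := by positivity
  have ht1 : t ≤ 1 := inv_le_one_of_one_le₀ (by linarith)
  set y := arccos t
  have hy : cos y = t := cos_arccos (by linarith) ht1
  have hy0 : 0 ≤ y := arccos_nonneg t
  have hy1 : y < π / 2 := arccos_lt_pi_div_two.2 ht0
  have hz : (y : ℂ) * Complex.I ∈ strip := by
    have := pi_pos
    constructor <;> simp <;> linarith
  have e1 : Gc h (y * Complex.I) = C := E hz
  have hre : ((y : ℂ) * Complex.I).re = 0 := by simp
  have him : ((y : ℂ) * Complex.I).im = y := by simp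
  have hsum : Summable (fun j : ℤ => (Complex.cosh ((y : ℂ) * Complex.I + j * h))⁻¹) := by
    apply Summable.of_norm_bounded ((summable_sc hh 0).mul_left (t / 2)⁻¹)
    intro j
    have := (term_bound h ((y : ℂ) * Complex.I) j (δ := t / 2) (by positivity)
      (by rw [him, hy]; linarith)).2
    rwa [hre] at this
  unfold Gc at e1
  rw [hsum.tsum_eq_add_tsum_ite 0] at e1
  have e2 : (Complex.cosh ((y : ℂ) * Complex.I + ((0 : ℤ) : ℂ) * h))⁻¹ = ((M + 1 : ℝ) : ℂ) := by
    rw [Int.cast_zero, zero_mul, add_zero, Complex.cosh_mul_I, ← Complex.ofReal_cos, hy, ht]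
    push_cast; simp
  rw [e2] at e1
  have e3 : ‖∑' j : ℤ, (if j = 0 then 0 else (Complex.cosh ((y : ℂ) * Complex.I + j * h))⁻¹)‖
      ≤ κ⁻¹ * G h 0 := by
    apply tsum_of_norm_bounded ((summable_sc hh 0).hasSum.mul_left κ⁻¹)
    intro j
    split_ifs with hj
    · rw [norm_zero]; exact mul_nonneg (inv_pos.2 hκ).le (sc_pos _).le
    · rw [decomp, hre, him]
      apply (norm_cosh_ge hκ _).2
      have h1 : 1 ≤ |(j : ℝ)| := by exact_mod_cast Int.one_le_abs hj
      have h2 : cosh h ≤ cosh (0 + j * h) := by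
        rw [cosh_le_cosh, zero_add, abs_mul, abs_of_pos hh]
        nlinarith
      have h3 : cosh h ^ 2 ≤ cosh (0 + j * h) ^ 2 := pow_le_pow_left₀ (cosh_pos h).le h2 2
      have h4 : 1 ≤ sc h ^ 2 * cosh (0 + j * h) ^ 2 := by
        calc 1 = sc h ^ 2 * cosh h ^ 2 := by
              unfold sc; have := (cosh_pos h).ne'; field_simp
          _ ≤ _ := mul_le_mul_of_nonneg_left h3 (sq_nonneg _)
      have h5 := cosh_sq (0 + (j : ℝ) * h)
      have h6 := sq_nonneg (cos y)
      simp only [κ]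
      rw [tanh_sq']
      linarith
  have e4 : ((M + 1 : ℝ) : ℂ) = C - ∑' j : ℤ, (if j = 0 then 0 else (Complex.cosh ((y : ℂ) * Complex.I + j * h))⁻¹) := by
    rw [← e1]; ring
  have e5 : M + 1 ≤ M := by
    calc M + 1 = ‖((M + 1 : ℝ) : ℂ)‖ := by
          rw [Complex.norm_real, norm_eq_abs, abs_of_pos (by linarith)]
      _ ≤ ‖(C : ℂ)‖ + κ⁻¹ * G h 0 := by rw [e4]; exact (norm_sub_le _ _).trans (by gcongr)
      _ = M := by rw [Complex.norm_real, norm_eq_abs]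
  linarith

lemma X0_ne {h : ℝ} (hh : 0 < h) : X h 0 ≠ 0 := by
  intro h0
  refine G_not_const hh (G h 0) fun x => ?_
  refine is_const_of_deriv_eq_zero (fun x => (hasDerivAt_G hh x).differentiableAt) (fun x => ?_) x 0
  rw [(hasDerivAt_G hh x).deriv, (rot hh x).2, h0]; simp

lemma G1_zero_iff {h : ℝ} (hh : 0 < h) (x : ℝ) : G1 h x = 0 ↔ ∃ n : ℤ, x = n * h / 2 := by
  rw [(rot hh x).2, mul_eq_zero, or_iff_right (neg_ne_zero.2 (X0_ne hh)), sin_eq_zero_iff]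
  refine exists_congr fun n => ?_
  rw [← (Phi_strictMono hh).injective.eq_iff (a := x), Phi_half hh n]
  constructor <;> intro H <;> linarith

lemma X_ne {h : ℝ} (hh : 0 < h) {x : ℝ} (hx : G1 h x = 0) : X h x ≠ 0 := by
  have r := rot hh x
  rw [hx] at r
  have hs : sin (2 * Phi h x) = 0 := by
    have := r.2.symm
    exact (mul_eq_zero.1 this).resolve_left (neg_ne_zero.2 (X0_ne hh))
  rw [r.1]
  apply mul_ne_zero (X0_ne hh)
  intro hc
  have := sin_sq_add_cos_sq (2 * Phi h x)
  rw [hs, hc] at this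
  norm_num at this

lemma F_shift (h x : ℝ) : F h (x + h) = F h x := by
  unfold F
  rw [← (Equiv.addRight (1:ℤ)).tsum_eq (fun j : ℤ => sc (x + j * h) ^ 2)]
  refine tsum_congr fun j => ?_
  congr 2; simp; ring

lemma mu_eq {a b h : ℝ} (hb : 0 < b) (hab : b < a) (hh : 0 < h)
    (hsinh : sinh (h / 2) = Real.sqrt (a ^ 2 - b ^ 2) / b) (s : ℝ) :
    a / b ^ 3 - a * b / (a ^ 2 * (1 / cosh s) ^ 2 + b ^ 2 * tanh s ^ 2) ^ 2
    = a / b ^ 3 * ((2 * sinh (h / 2) ^ 2 - 2 * sinh (h / 2) ^ 4 * cosh h / sinh h ^ 2)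
        * (sc (s - h / 2) * sc (s - h / 2 + (1 : ℤ) * h))
      + sinh (h / 2) ^ 4 / sinh h ^ 2 * (sc (s - h / 2) ^ 2 + sc (s + h / 2) ^ 2)) := by
  have hσ : sinh (h / 2) ^ 2 * b ^ 2 = a ^ 2 - b ^ 2 := by
    rw [hsinh, div_pow, sq_sqrt (by nlinarith)]
    field_simp
  set σ := sinh (h / 2) with hσd
  set γ := cosh (h / 2) with hγd
  set C := cosh s with hC
  set S := sinh s with hS
  have hCS : C ^ 2 = S ^ 2 + 1 := cosh_sq s
  have hg : γ ^ 2 = σ ^ 2 + 1 := cosh_sq (h / 2)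
  have hγ0 : 0 < γ := cosh_pos _
  have hσ0 : 0 < σ := sinh_pos_iff.2 (by linarith)
  have hC0 : 0 < C := cosh_pos _
  have e1 : sinh h = 2 * σ * γ := by rw [show h = 2 * (h / 2) by ring, sinh_two_mul]
  have e2 : cosh h = γ ^ 2 + σ ^ 2 := by rw [show h = 2 * (h / 2) by ring, cosh_two_mul]
  have ep : cosh (s + h / 2) = C * γ + S * σ := cosh_add _ _
  have em : cosh (s - h / 2) = C * γ - S * σ := cosh_sub _ _
  have hp : 0 < C * γ + S * σ := ep ▸ cosh_pos _
  have hm : 0 < C * γ - S * σ := em ▸ cosh_pos _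
  have hD : (C * γ + S * σ) * (C * γ - S * σ) = C ^ 2 + σ ^ 2 := by
    linear_combination C ^ 2 * hg + σ ^ 2 * hCS
  have hD0 : 0 < C ^ 2 + σ ^ 2 := by positivity
  have l1 : a ^ 2 * (1 / C) ^ 2 + b ^ 2 * tanh s ^ 2 = b ^ 2 * (C ^ 2 + σ ^ 2) / C ^ 2 := by
    rw [tanh_eq_sinh_div_cosh, ← hC, ← hS]
    field_simp
    linear_combination (-1) * hσ - b ^ 2 * hCS
  rw [l1, show s - h / 2 + ((1 : ℤ) : ℝ) * h = s + h / 2 by push_cast; ring]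
  unfold sc
  rw [ep, em, e1, e2, ← mul_inv, mul_comm (C * γ - S * σ), hD]
  have hsq : ((C * γ - S * σ)⁻¹) ^ 2 + ((C * γ + S * σ)⁻¹) ^ 2
      = (2 * (C ^ 2 * γ ^ 2 + S ^ 2 * σ ^ 2)) / (C ^ 2 + σ ^ 2) ^ 2 := by
    rw [← hD]; field_simp; ring
  rw [hsq]
  have hS2 : S ^ 2 = C ^ 2 - 1 := by linarith
  have hg4 : γ ≠ 0 := hγ0.ne'
  rw [hS2]
  have : (2 * σ * γ) ^ 2 = 4 * σ ^ 2 * (σ ^ 2 + 1) := by rw [← hg]; ring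
  rw [this, hg]
  have : σ ^ 2 + 1 ≠ 0 := by positivity
  field_simp
  ring

lemma L_eq {a b h : ℝ} (hb : 0 < b) (hab : b < a) (hh : 0 < h)
    (hsinh : sinh (h / 2) = Real.sqrt (a ^ 2 - b ^ 2) / b) :
    ∃ A K : ℝ, 0 < K ∧ ∀ s : ℝ, 2 * b * ∑' j : ℤ, (a / b ^ 3 -
      a * b / (a ^ 2 * (1 / cosh (s + j * h)) ^ 2 + b ^ 2 * tanh (s + j * h) ^ 2) ^ 2)
      = A + K * G h (s + h / 2) ^ 2 := by
  have ha : 0 < a := hb.trans hab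
  have hs1 : 0 < sinh (h / 2) := sinh_pos_iff.2 (by linarith)
  have hs2 : 0 < sinh h := sinh_pos_iff.2 hh
  set α := 2 * sinh (h / 2) ^ 2 - 2 * sinh (h / 2) ^ 4 * cosh h / sinh h ^ 2
  set β := sinh (h / 2) ^ 4 / sinh h ^ 2
  have hβ : 0 < β := by positivity
  refine ⟨2 * b * (a / b ^ 3) * (α * (((1 : ℤ) : ℝ) * 2 / sinh (((1 : ℤ) : ℝ) * h)) - 2 * β * c0 h),
    2 * b * (a / b ^ 3) * (2 * β), by positivity, fun s => ?_⟩
  have A1 := hasSum_sc_mul hh (s - h / 2) (m := 1) one_ne_zero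
  have A2 := (summable_sc_pow hh (s - h / 2) 1).hasSum
  have A3 := (summable_sc_pow hh (s + h / 2) 1).hasSum
  have A := ((A1.mul_left α).add ((A2.add A3).mul_left β)).mul_left (a / b ^ 3)
  have e : ∑' j : ℤ, (a / b ^ 3 -
      a * b / (a ^ 2 * (1 / cosh (s + j * h)) ^ 2 + b ^ 2 * tanh (s + j * h) ^ 2) ^ 2)
      = a / b ^ 3 * (α * (((1 : ℤ) : ℝ) * 2 / sinh (((1 : ℤ) : ℝ) * h))
        + β * (F h (s - h / 2) + F h (s + h / 2))) := by
    refine Eq.trans (tsum_congr fun j => ?_) A.tsum_eq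
    rw [mu_eq hb hab hh hsinh, show s + j * h - h / 2 = s - h / 2 + j * h by ring,
      show s + j * h + h / 2 = s + h / 2 + j * h by ring]
  have e2 : F h (s - h / 2) = F h (s + h / 2) := by
    rw [← F_shift, show s - h / 2 + h = s + h / 2 by ring]
  rw [e, e2, G_sq hh]
  ring

end Homo

/-- The homoclinic Melnikov potential `L̂₁(s) = 2b Σ_{j∈ℤ} μ̂₁(s + jh)` is smooth,
its real critical points are exactly the points of `(h/2)·ℤ`, and all of them are
nondegenerate. -/
theorem homoclinic_potential_critical_points (a b h : ℝ) (hb : 0 < b) (hab : b < a)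
    (hh : 0 < h)
    (hsinh : Real.sinh (h / 2) = Real.sqrt (a ^ 2 - b ^ 2) / b)
    (μ L : ℝ → ℝ)
    (hμ : μ = fun s => a / b ^ 3 -
      a * b / (a ^ 2 * (1 / Real.cosh s) ^ 2 + b ^ 2 * Real.tanh s ^ 2) ^ 2)
    (hL : L = fun s => 2 * b * ∑' j : ℤ, μ (s + j * h)) :
    ContDiff ℝ (⊤ : ℕ∞) L ∧
    (∀ s : ℝ, deriv L s = 0 ↔ ∃ j : ℤ, 2 * s / h = (j : ℝ)) ∧
    (∀ s : ℝ, (∃ j : ℤ, 2 * s / h = (j : ℝ)) → deriv (deriv L) s ≠ 0) := by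
  obtain ⟨A, K, hK, hAK⟩ := Homo.L_eq hb hab hh hsinh
  have eL : L = fun s => A + K * Homo.G h (s + h / 2) ^ 2 := by
    rw [hL, hμ]; funext s; exact hAK s
  clear hL hμ hAK
  have hG : ∀ s, HasDerivAt (fun s => Homo.G h (s + h / 2)) (Homo.G1 h (s + h / 2)) s :=
    fun s => (Homo.hasDerivAt_G hh (s + h / 2)).comp_add_const s (h / 2)
  have hG1 : ∀ s, HasDerivAt (fun s => Homo.G1 h (s + h / 2))
      (-2 * Homo.G h (s + h / 2) * Homo.X h (s + h / 2)) s :=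
    fun s => (Homo.G_ode hh (s + h / 2)).comp_add_const s (h / 2)
  have d1 : deriv L = fun s => 2 * K * (Homo.G h (s + h / 2) * Homo.G1 h (s + h / 2)) := by
    funext s
    rw [eL]
    refine ((((hG s).pow 2).const_mul K).const_add A).deriv.trans ?_
    norm_num; ring
  have iff1 : ∀ s : ℝ, Homo.G1 h (s + h / 2) = 0 ↔ ∃ j : ℤ, 2 * s / h = (j : ℝ) := by
    intro s
    rw [Homo.G1_zero_iff hh]
    constructor
    · rintro ⟨n, hn⟩
      refine ⟨n - 1, ?_⟩
      rw [div_eq_iff hh.ne']; push_cast; linarith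
    · rintro ⟨n, hn⟩
      refine ⟨n + 1, ?_⟩
      rw [div_eq_iff hh.ne'] at hn; push_cast; linarith
  refine ⟨?_, fun s => ?_, fun s hs => ?_⟩
  · rw [eL]
    have := (Homo.G_smooth hh).comp (contDiff_id.add (contDiff_const (c := h / 2)))
    exact contDiff_const.add (contDiff_const.mul (this.pow 2))
  · rw [← iff1 s, d1]
    have := Homo.G_pos hh (s + h / 2)
    simp [hK.ne', this.ne']
  · have z := (iff1 s).2 hs
    have hx := Homo.X_ne hh z
    have hg := (Homo.G_pos hh (s + h / 2)).ne'
    rw [d1, (((hG s).fun_mul (hG1 s)).const_mul (2 * K)).deriv, z]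
    have : 2 * K * (0 * 0 + Homo.G h (s + h / 2) *
        (-2 * Homo.G h (s + h / 2) * Homo.X h (s + h / 2)))
        = -(4 * K * Homo.G h (s + h / 2) ^ 2 * Homo.X h (s + h / 2)) := by ring
    rw [this]
    have := hK.ne'
    exact neg_ne_zero.2 (mul_ne_zero (mul_ne_zero (by positivity) (pow_ne_zero 2 hg)) hx)
end

section
/- Let 0 < b < a be real numbers, c = √(a² − b²), and let h > 0 be determined by sinh(h/2) = c/b. Then a complex number s satisfies b²·cosh²(s) + c² = 0 if and only if s belongs to the set S = {h/2 + πi/2 + jπi : j ∈ ℤ} ∪ {−h/2 + πi/2 + jπi : j ∈ ℤ}. Equivalently, the zeros of the complex function g(s) = b² + c²·sech²(s) (defined where cosh s ≠ 0) are exactly the points of S. -/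
/-- For `0 < b < a`, `c = √(a² − b²)` and `h > 0` with `sinh(h/2) = c/b`, the zeros of
`s ↦ b² cosh² s + c²` in `ℂ` are exactly the points `±h/2 + πi/2 + jπi`, `j ∈ ℤ`;
equivalently, these are the zeros of `g(s) = b² + c² sech² s` (where `cosh s ≠ 0`). -/
theorem zeros_of_g (a b c h : ℝ) (hb : 0 < b) (hab : b < a)
    (hc : c = Real.sqrt (a ^ 2 - b ^ 2)) (hh : 0 < h)
    (hsinh : Real.sinh (h / 2) = c / b) :
    (∀ s : ℂ, (b : ℂ) ^ 2 * Complex.cosh s ^ 2 + (c : ℂ) ^ 2 = 0 ↔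
      (∃ j : ℤ, s = h / 2 + Real.pi * Complex.I / 2 + j * Real.pi * Complex.I ∨
                s = -(h / 2) + Real.pi * Complex.I / 2 + j * Real.pi * Complex.I)) ∧
    (∀ s : ℂ, Complex.cosh s ≠ 0 →
      ((b : ℂ) ^ 2 + (c : ℂ) ^ 2 * ((Complex.cosh s)⁻¹) ^ 2 = 0 ↔
      (∃ j : ℤ, s = h / 2 + Real.pi * Complex.I / 2 + j * Real.pi * Complex.I ∨
                s = -(h / 2) + Real.pi * Complex.I / 2 + j * Real.pi * Complex.I))) := by
  have hb' : (b : ℂ) ≠ 0 := by exact_mod_cast hb.ne'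
  have hs : (c : ℂ) = b * Complex.sinh (h / 2) := by
    have h1 : c = b * Real.sinh (h / 2) := by rw [hsinh]; field_simp
    rw [h1]; push_cast; rfl
  have hI := Complex.I_sq
  have key : ∀ s : ℂ, (b : ℂ) ^ 2 * Complex.cosh s ^ 2 + (c : ℂ) ^ 2 = 0 ↔
      (∃ j : ℤ, s = h / 2 + Real.pi * Complex.I / 2 + j * Real.pi * Complex.I ∨
                s = -(h / 2) + Real.pi * Complex.I / 2 + j * Real.pi * Complex.I) := by
    intro s
    have e1 : (b : ℂ) ^ 2 * Complex.cosh s ^ 2 + (c : ℂ) ^ 2 = 0 ↔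
        Complex.cos (h * Complex.I + Real.pi) = Complex.cos (2 * s * Complex.I) := by
      rw [Complex.cos_add_pi, Complex.cos_mul_I, Complex.cos_mul_I, hs]
      have e2 : Complex.cosh (h : ℂ) = 2 * Complex.sinh (h / 2) ^ 2 + 1 := by
        have h2 : (h : ℂ) = 2 * (h / 2) := by ring
        conv_lhs => rw [h2]
        rw [Complex.cosh_two_mul, Complex.cosh_sq]; ring
      have e3 : Complex.cosh (2 * s) = 2 * Complex.cosh s ^ 2 - 1 := by
        rw [Complex.cosh_two_mul, Complex.sinh_sq]; ring
      rw [e2, e3]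
      constructor
      · intro H
        have H2 : (b : ℂ) ^ 2 * (Complex.cosh s ^ 2 + Complex.sinh (h / 2) ^ 2) = 0 := by
          linear_combination H
        have H3 := (mul_eq_zero.mp H2).resolve_left (pow_ne_zero 2 hb')
        linear_combination -2 * H3
      · intro H
        linear_combination -(b : ℂ) ^ 2 / 2 * H
    rw [e1, Complex.cos_eq_cos_iff]
    constructor
    · rintro ⟨k, H | H⟩
      · refine ⟨-(k + 1), Or.inl ?_⟩
        push_cast
        linear_combination (-Complex.I / 2) * H + (s - h / 2) * hI
      · refine ⟨-k, Or.inr ?_⟩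
        push_cast
        linear_combination (-Complex.I / 2) * H + (s + h / 2) * hI
    · rintro ⟨j, H | H⟩
      · refine ⟨-(j + 1), Or.inl ?_⟩
        push_cast
        linear_combination (2 * Complex.I) * H + (Real.pi + 2 * j * Real.pi) * hI
      · refine ⟨-j, Or.inr ?_⟩
        push_cast
        linear_combination (2 * Complex.I) * H + (Real.pi + 2 * j * Real.pi) * hI
  refine ⟨key, fun s hs0 => ?_⟩
  rw [← key s]
  have e : (b : ℂ) ^ 2 * Complex.cosh s ^ 2 + (c : ℂ) ^ 2 =
      ((b : ℂ) ^ 2 + (c : ℂ) ^ 2 * ((Complex.cosh s)⁻¹) ^ 2) * Complex.cosh s ^ 2 := by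
    field_simp
  rw [e, mul_eq_zero, or_iff_left (pow_ne_zero 2 hs0)]
end
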